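/- arXiv:2007.14304 — 3 statements merged into one kernel-verified Lean document; each statement's English description precedes it below -/
import Mathlib

section
/- In the quotient ring Z[i][X]/(X² − 2X) of the polynomial ring over the Gaussian integers by the ideal generated by X² − 2X, the residue class of X − 1 is not a square. Equivalently, there exist no Gaussian integers a, b with 2·a·(a + b) = 1 and b² = −1. -/
open Polynomial

/-- No even Gaussian integer equals `1`. -/
lemma GaussianInt.two_mul_ne_one (z : GaussianInt) : 2 * z ≠ 1 := by
  intro h
  have hre := congrArg Zsqrtd.re h
  rw [two_mul, Zsqrtd.re_add, Zsqrtd.re_one] at hre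
  omega

/-- A square root of `X - 1` modulo `X² - 2X` gives a solution of the coefficient equations. -/
lemma exists_coeff_eq_of_isSquare_mk_X_sub_one {R : Type*} [CommRing R] [IsDomain R] [CharZero R]
    (h : IsSquare (Ideal.Quotient.mk (Ideal.span {(X : R[X]) ^ 2 - 2 * X}) (X - 1))) :
    ∃ a b : R, 2 * a * (a + b) = 1 ∧ b ^ 2 = -1 := by
  obtain ⟨y, hy⟩ := h
  obtain ⟨p, rfl⟩ := Ideal.Quotient.mk_surjective y
  rw [← map_mul, Ideal.Quotient.mk_eq_mk_iff_sub_mem, Ideal.mem_span_singleton] at hy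
  obtain ⟨q, hq⟩ := hy
  have h0 := congrArg (eval 0) hq
  have h2 := congrArg (eval 2) hq
  obtain ⟨c, hc⟩ := sub_dvd_eval_sub 2 0 p
  simp only [eval_sub, eval_mul, eval_pow, eval_X, eval_one, eval_ofNat] at h0 h2
  have hp : eval 2 p = eval 0 p + 2 * c := by linear_combination hc
  rw [hp] at h2
  refine ⟨c, eval 0 p, ?_, by linear_combination -h0⟩
  apply mul_left_cancel₀ (two_ne_zero (α := R))
  linear_combination h0 - h2

/-- In the quotient ring `ℤ[i][X]/(X² − 2X)`, the residue class of `X − 1` is not a square;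
equivalently, there are no Gaussian integers `a`, `b` with `2·a·(a+b) = 1` and `b² = −1`. -/
theorem X_sub_one_not_square_in_gaussian_quotient :
    ¬ IsSquare ((Ideal.Quotient.mk
        (Ideal.span {(X : Polynomial GaussianInt) ^ 2 - 2 * X})) (X - 1)) ∧
    ¬ ∃ a b : GaussianInt, 2 * a * (a + b) = 1 ∧ b ^ 2 = -1 := by
  have key : ¬ ∃ a b : GaussianInt, 2 * a * (a + b) = 1 ∧ b ^ 2 = -1 := by
    rintro ⟨a, b, hab, -⟩
    exact GaussianInt.two_mul_ne_one (a * (a + b)) (by rw [← mul_assoc, hab])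
  exact ⟨fun h => key (exists_coeff_eq_of_isSquare_mk_X_sub_one h), key⟩
end

section
/- Let R be the localization of the Gaussian integers Z[i] away from the element 2 (i.e. R = Z[i][1/2]). Then in the quotient ring R[X]/(X² − 2X), the residue class of X − 1 is a square; indeed the elements a = (1 − i)/2 and b = i of R satisfy 2·a·(a + b) = 1 and b² = −1, so that (a·X + b)² ≡ X − 1 modulo (X² − 2X). -/
open Polynomial

/-- The element `(1 - i)/2` of `ℤ[i][1/2]`. -/
noncomputable def gaussHalfOneSubI : Localization.Away (2 : GaussianInt) :=
  algebraMap GaussianInt (Localization.Away (2 : GaussianInt)) (1 - Zsqrtd.sqrtd) *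
    Localization.Away.invSelf 2

/-- The element `i` of `ℤ[i][1/2]`. -/
noncomputable def gaussI : Localization.Away (2 : GaussianInt) :=
  algebraMap GaussianInt (Localization.Away (2 : GaussianInt)) Zsqrtd.sqrtd

theorem gaussI_sq : gaussI ^ 2 = -1 := by
  have h : (Zsqrtd.sqrtd : GaussianInt) ^ 2 = -1 := by
    ext <;> simp [sq]
  rw [gaussI, ← map_pow, h, map_neg, map_one]

theorem two_mul_invSelf_two :
    (2 : Localization.Away (2 : GaussianInt)) * Localization.Away.invSelf 2 = 1 := by
  have h := IsLocalization.Away.mul_invSelf (S := Localization.Away (2 : GaussianInt))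
    (2 : GaussianInt)
  rwa [map_ofNat, IsLocalization.Away.invSelf, ← Localization.mk_eq_mk'] at h

theorem two_mul_gaussHalfOneSubI_mul_add :
    2 * gaussHalfOneSubI * (gaussHalfOneSubI + gaussI) = 1 := by
  have ha : gaussHalfOneSubI = (1 - gaussI) * Localization.Away.invSelf 2 := by
    rw [gaussHalfOneSubI, gaussI, map_sub, map_one]
  have htwo : 2 * gaussHalfOneSubI = 1 - gaussI := by
    linear_combination 2 * ha + (1 - gaussI) * two_mul_invSelf_two
  have hmul : (1 - gaussI) * gaussHalfOneSubI = -gaussI := by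
    linear_combination (1 - gaussI) * ha - gaussI * two_mul_invSelf_two +
      Localization.Away.invSelf (2 : GaussianInt) * gaussI_sq
  linear_combination (gaussHalfOneSubI + gaussI) * htwo + hmul - gaussI_sq

theorem mk_linear_sq_eq_mk_X_sub_one {R : Type*} [CommRing R] {a b : R}
    (hab : 2 * a * (a + b) = 1) (hb : b ^ 2 = -1) :
    Ideal.Quotient.mk (Ideal.span {(X : R[X]) ^ 2 - 2 * X}) ((C a * X + C b) ^ 2) =
      Ideal.Quotient.mk (Ideal.span {(X : R[X]) ^ 2 - 2 * X}) (X - 1) := by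
  rw [Ideal.Quotient.eq, Ideal.mem_span_singleton]
  have hab' : (2 : R[X]) * C a * (C a + C b) = 1 := by
    simpa only [map_mul, map_add, map_ofNat, map_one] using congrArg (C : R → R[X]) hab
  have hb' : (C b : R[X]) ^ 2 = -1 := by simpa using congrArg (C : R → R[X]) hb
  exact ⟨C a ^ 2, by linear_combination X * hab' + hb'⟩

/-- Let `R = ℤ[i][1/2]` be the localization of the Gaussian integers away from `2`. Then
in `R[X]/(X² − 2X)` the residue class of `X − 1` is a square; indeed `a = (1 − i)/2` and
`b = i` satisfy `2·a·(a + b) = 1` and `b² = −1`, and `(a·X + b)² ≡ X − 1 mod (X² − 2X)`. -/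
theorem X_sub_one_square_in_localized_gaussian_quotient :
    IsSquare ((Ideal.Quotient.mk
        (Ideal.span {(X : Polynomial (Localization.Away (2 : GaussianInt))) ^ 2 - 2 * X}))
        (X - 1)) ∧
    2 * gaussHalfOneSubI * (gaussHalfOneSubI + gaussI) = 1 ∧
    gaussI ^ 2 = -1 ∧
    (Ideal.Quotient.mk
        (Ideal.span {(X : Polynomial (Localization.Away (2 : GaussianInt))) ^ 2 - 2 * X}))
        ((C gaussHalfOneSubI * X + C gaussI) ^ 2) =
      (Ideal.Quotient.mk
        (Ideal.span {(X : Polynomial (Localization.Away (2 : GaussianInt))) ^ 2 - 2 * X}))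
        (X - 1) := by
  have hmk := mk_linear_sq_eq_mk_X_sub_one two_mul_gaussHalfOneSubI_mul_add gaussI_sq
  refine ⟨?_, two_mul_gaussHalfOneSubI_mul_add, gaussI_sq, hmk⟩
  rw [← hmk, map_pow]
  exact IsSquare.sq _
end

section
/- Let A be a torsion-free abelian group (i.e. n • a = 0 with n a nonzero integer implies a = 0) and let C be an abelian group satisfying 2 • c = 0 for every c ∈ C. Then Ext¹_Z(A, C) = 0; that is, the first Ext group of A with coefficients in C, computed in the abelian category of Z-modules, is trivial (equivalently, every short exact sequence of abelian groups 0 → C → E → A → 0 splits). -/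
open CategoryTheory Limits

/-- A homomorphism to a `ZMod p`-vector space factors through any homomorphism to a
`ZMod p`-vector space with smaller kernel. -/
theorem AddMonoidHom.exists_comp_eq_of_ker_le {M V W : Type*}
    [AddCommGroup M] [AddCommGroup V] [AddCommGroup W] (p : ℕ) [Fact p.Prime]
    [Module (ZMod p) V] [Module (ZMod p) W] (φ : M →+ V) (f : M →+ W) (h : φ.ker ≤ f.ker) :
    ∃ g : V →+ W, g.comp φ = f := by
  have hker : φ.rangeRestrict.ker ≤ f.ker := φ.ker_rangeRestrict.trans_le h
  let f' : AddSubgroup.toZModSubmodule p φ.range →+ W :=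
    φ.rangeRestrict.liftOfSurjective φ.rangeRestrict_surjective ⟨f, hker⟩
  obtain ⟨g, hg⟩ := LinearMap.exists_extend (f'.toZModLinearMap p)
  refine ⟨g.toAddMonoidHom, AddMonoidHom.ext fun m ↦ ?_⟩
  exact (LinearMap.congr_fun hg (φ.rangeRestrict m)).trans
    (φ.rangeRestrict.liftOfRightInverse_comp_apply _
      (Function.rightInverse_surjInv φ.rangeRestrict_surjective) ⟨f, hker⟩ m)

/-- Let `C` be an abelian group killed by a prime `p` and `d : M →+ N`. A homomorphism `f : M →+ C`
that vanishes on every `m` with `d m ∈ pN` factors through `d`. -/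
theorem AddMonoidHom.exists_comp_eq_of_prime_torsion {M N C : Type*}
    [AddCommGroup M] [AddCommGroup N] [AddCommGroup C] (p : ℕ) [Fact p.Prime]
    (hC : ∀ c : C, p • c = 0) (d : M →+ N) (f : M →+ C)
    (hf : ∀ m n, d m = p • n → f m = 0) :
    ∃ g : N →+ C, g.comp d = f := by
  let H : AddSubgroup N := (nsmulAddMonoidHom (α := N) p).range
  let : Module (ZMod p) C := AddCommGroup.zmodModule hC
  let : Module (ZMod p) (N ⧸ H) := QuotientAddGroup.zmodModule fun x ↦ ⟨x, rfl⟩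
  obtain ⟨g, hg⟩ := AddMonoidHom.exists_comp_eq_of_ker_le p
    ((QuotientAddGroup.mk' H).comp d) f fun m hm ↦ by
      obtain ⟨n, hn⟩ := (QuotientAddGroup.eq_zero_iff (d m)).1 hm
      exact hf m n hn.symm
  exact ⟨g.comp (QuotientAddGroup.mk' H), hg⟩

/-- Let `A` be a torsion-free abelian group and `C` an abelian group with `2 • c = 0`
for all `c`. Then `Ext¹_ℤ(A, C) = 0`. -/
theorem ext_one_eq_zero_of_torsionFree_of_two_torsion
    (A C : Type) [AddCommGroup A] [AddCommGroup C]
    (hA : ∀ (n : ℤ) (a : A), n ≠ 0 → n • a = 0 → a = 0)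
    (hC : ∀ c : C, (2 : ℤ) • c = 0) :
    IsZero (((Ext ℤ (ModuleCat ℤ) 1).obj
        (Opposite.op (ModuleCat.of ℤ A))).obj (ModuleCat.of ℤ C)) := by
  let P := projectiveResolution (ModuleCat.of ℤ A)
  refine IsZero.of_iso ?_ (P.isoExt 1 (ModuleCat.of ℤ C))
  rw [← HomologicalComplex.exactAt_iff_isZero_homology,
    HomologicalComplex.exactAt_iff' _ 0 1 2 (by simp) (by simp),
    ShortComplex.moduleCat_exact_iff]
  intro (f : P.complex.X 1 ⟶ ModuleCat.of ℤ C) hf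
  replace hf : P.complex.d 2 1 ≫ f = 0 := hf
  have hC' (c : C) : 2 • c = 0 := by simpa only [ofNat_zsmul] using hC c
  obtain ⟨g, hg⟩ := AddMonoidHom.exists_comp_eq_of_prime_torsion 2 hC'
    (P.complex.d 1 0).hom.toAddMonoidHom f.hom.toAddMonoidHom (by
      intro m n (hmn : P.complex.d 1 0 m = 2 • n)
      have hπ : P.π.f 0 n = 0 := by
        refine hA 2 (P.π.f 0 n) two_ne_zero ?_
        have h := ConcreteCategory.congr_hom P.complex_d_comp_π_f_zero m
        rw [ConcreteCategory.comp_apply, hmn, map_nsmul] at h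
        exact (ofNat_zsmul _ 2).trans h
      obtain ⟨m', hm'⟩ := (ShortComplex.moduleCat_exact_iff _).1 P.exact₀ n hπ
      obtain ⟨q, hq⟩ := (ShortComplex.moduleCat_exact_iff _).1 (P.exact_succ 0) (m - 2 • m') (by
        change P.complex.d 1 0 (m - 2 • m') = 0
        rw [map_sub, map_nsmul, hmn]
        exact sub_eq_zero.2 (congrArg (2 • ·) hm'.symm))
      have h : f (m - 2 • m') = 0 := by
        rw [← hq]
        exact ConcreteCategory.congr_hom hf q
      rw [map_sub, map_nsmul, sub_eq_zero] at h
      exact h.trans (hC' _))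
  let g' : P.complex.X 0 →ₗ[ℤ] C :=
    { g with map_smul' := fun n x ↦ map_intCast_smul g ℤ ℤ n x }
  refine ⟨ModuleCat.ofHom g', ?_⟩
  change P.complex.d 1 0 ≫ ModuleCat.ofHom g' = f
  ext m
  exact DFunLike.congr_fun hg m
end
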